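/- arXiv:1907.09329 — 4 statements merged into one kernel-verified Lean document; each statement's English description precedes it below -/
import Mathlib

section
/- Let c ∈ ℝ, k₋, k₊ > 0, θ₋, θ₊ ∈ ℝ. Let f : ℝ → ℝ be a C⁵ function satisfying -c f'(ξ) + f(ξ) f'(ξ) + f⁽⁵⁾(ξ) = 0 for all ξ ∈ ℝ, and let φ₋, φ₊ : ℝ → ℝ be 2π-periodic C⁴ functions such that for each j = 0,1,2,3, the difference f⁽ʲ⁾(ξ) − (d/dξ)ʲ[φ₋(k₋ξ − θ₋)] tends to 0 as ξ → −∞ and f⁽ʲ⁾(ξ) − (d/dξ)ʲ[φ₊(k₊ξ − θ₊)] tends to 0 as ξ → +∞. Denote by ū± the period average of φ±, by P²± that of φ±², by P³± that of φ±³, and by Q± that of (φ±'')². Then the Rankine–Hugoniot relations hold with shock speed V = c: (i) −c(ū₋ − ū₊) + (1/2)(P²₋ − P²₊) = 0; (ii) −(c/2)(P²₋ − P²₊) + (1/3)(P³₋ − P³₊) + (5/2)(k₋⁴ Q₋ − k₊⁴ Q₊) = 0; (iii) −c(k₋ − k₊) + (c k₋ − c k₊) = 0. -/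
/-!
A traveling-wave profile has the first integrals
`f⁗ - c f + f² / 2 = A` and `f f⁗ - f' f''' + f''² / 2 - c f² / 2 + f³ / 3 = B`, which can be
rewritten as `(f''')' = A - (-c f + f² / 2)` and
`(f f''' - 2 f' f'')' = B - (-c f² / 2 + f³ / 3 + (5/2) f''²)`.
Average such an identity over one period of the far field and push the window to `±∞`: the
derivative contributes nothing in the limit, because the differentiated quantity is asymptotically
periodic, and the flux contributes its mean over the limiting periodic wave. So `A` and `B` are the
averaged fluxes at either end.
-/

open Filter Function Set Topology

section AsymptoticallyPeriodic

variable {E F : Type*} [NormedAddCommGroup E] [NormedAddCommGroup F]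
  {T : ℝ} {l : Filter ℝ} {a p : ℝ → E}

/-- The function `a` approaches the continuous `T`-periodic function `p` along `l`; with `l = atTop`
or `l = atBot`, this says that `p` is the far field of `a`. -/
structure AsympPeriodic (T : ℝ) (l : Filter ℝ) (a p : ℝ → E) : Prop where
  continuous : Continuous p
  periodic : Periodic p T
  tendsto : Tendsto (fun x => a x - p x) l (𝓝 0)

namespace AsympPeriodic

theorem comp_continuous (ha : AsympPeriodic T l a p) (hT : T ≠ 0) {φ : E → F}
    (hφ : Continuous φ) : AsympPeriodic T l (φ ∘ a) (φ ∘ p) where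
  continuous := hφ.comp ha.continuous
  periodic := ha.periodic.comp φ
  tendsto := by
    have hcompact : IsCompact (range p) := ha.periodic.compact_of_continuous hT ha.continuous
    have hpa : Tendsto (fun x => (p x, a x)) l (uniformity E) := by
      simpa only [tendsto_uniformity_iff_dist_tendsto_zero, dist_eq_norm_sub'] using
        tendsto_zero_iff_norm_tendsto_zero.1 ha.tendsto
    have hφpa : Tendsto (fun x => (φ (p x), φ (a x))) l (uniformity F) := fun r hr =>
      (hpa.eventually (hcompact.uniformContinuousAt_of_continuousAt φ
        (fun _ _ => hφ.continuousAt) hr)).mono fun x hx => hx (mem_range_self x)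
    rw [tendsto_uniformity_iff_dist_tendsto_zero] at hφpa
    exact tendsto_zero_iff_norm_tendsto_zero.2
      (by simpa only [dist_eq_norm_sub', comp_apply] using hφpa)

theorem tendsto_shift_sub_self (ha : AsympPeriodic T l a p)
    (hl : Tendsto (fun x => x + T) l l) : Tendsto (fun x => a (x + T) - a x) l (𝓝 0) := by
  have h := (ha.tendsto.comp hl).sub ha.tendsto
  rw [sub_zero] at h
  refine h.congr fun x => ?_
  rw [comp_apply, ha.periodic x, sub_sub_sub_cancel_right]

end AsympPeriodic

variable [NormedSpace ℝ F] [TendstoIxxClass Icc l l]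

theorem tendsto_integral_window {r : ℝ → F} (hr : Tendsto r l (𝓝 0))
    (hl : Tendsto (fun x => x + T) l l) :
    Tendsto (fun L => ∫ x in L..(L + T), r x) l (𝓝 0) := by
  rw [Metric.tendsto_nhds]
  intro ε hε
  have hsmall : ∀ᶠ x in l, ‖r x‖ < ε / (|T| + 1) := by
    simpa only [dist_zero_right] using Metric.tendsto_nhds.1 hr (ε / (|T| + 1)) (by positivity)
  filter_upwards [tendsto_smallSets_iff.1 (tendsto_id.uIcc hl) _ hsmall] with L hL
  calc dist (∫ x in L..(L + T), r x) 0 = ‖∫ x in L..(L + T), r x‖ := dist_zero_right _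
    _ ≤ ε / (|T| + 1) * |L + T - L| :=
      intervalIntegral.norm_integral_le_of_norm_le_const fun x hx =>
        (hL (uIoc_subset_uIcc hx)).le
    _ < ε := by
      rw [add_sub_cancel_left, div_mul_eq_mul_div, div_lt_iff₀ (by positivity)]
      linarith

variable [CompleteSpace F] [l.NeBot]

theorem AsympPeriodic.eq_average_of_hasDerivAt {h P g q : ℝ → F} {C : F}
    (hh : AsympPeriodic T l h P) (hg : AsympPeriodic T l g q) (hT : T ≠ 0)
    (hl : Tendsto (fun x => x + T) l l) (hgc : Continuous g)
    (hder : ∀ x, HasDerivAt h (C - g x) x) :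
    C = ⨍ x in (0 : ℝ)..T, q x := by
  have hwindow : ∀ L, h (L + T) - h L + ∫ x in L..(L + T), (g x - q x)
      = T • C - ∫ x in (0 : ℝ)..T, q x := fun L => by
    have hFTC : ∫ x in L..(L + T), (C - g x) = h (L + T) - h L :=
      intervalIntegral.integral_eq_sub_of_hasDerivAt (fun x _ => hder x)
        ((continuous_const.sub hgc).intervalIntegrable _ _)
    have hperiod : ∫ x in L..(L + T), q x = ∫ x in (0 : ℝ)..T, q x := by
      rw [hg.periodic.intervalIntegral_add_eq L 0, zero_add]
    rw [← hFTC, ← hperiod,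
      intervalIntegral.integral_sub intervalIntegrable_const (hgc.intervalIntegrable _ _),
      intervalIntegral.integral_sub (hgc.intervalIntegrable _ _)
        (hg.continuous.intervalIntegrable _ _),
      intervalIntegral.integral_const, add_sub_cancel_left, sub_add_sub_cancel]
  have hlim := (hh.tendsto_shift_sub_self hl).add (tendsto_integral_window hg.tendsto hl)
  simp only [hwindow, add_zero] at hlim
  have hTC : T • C = ∫ x in (0 : ℝ)..T, q x :=
    sub_eq_zero.1 (tendsto_nhds_unique tendsto_const_nhds hlim)
  rw [interval_average_eq, sub_zero, ← hTC, inv_smul_smul₀ hT]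

end AsymptoticallyPeriodic

theorem average_flux_eq_of_asympPeriodic {E F : Type*} [NormedAddCommGroup E]
    [NormedAddCommGroup F] [NormedSpace ℝ F] [CompleteSpace F] {a p₁ p₂ : ℝ → E} {T₁ T₂ : ℝ}
    (hT₁ : T₁ ≠ 0) (hT₂ : T₂ ≠ 0) (h₁ : AsympPeriodic T₁ atBot a p₁)
    (h₂ : AsympPeriodic T₂ atTop a p₂) (ha : Continuous a) {potential flux : E → F}
    (hpotential : Continuous potential) (hflux : Continuous flux) {C : F}
    (hder : ∀ x, HasDerivAt (potential ∘ a) (C - flux (a x)) x) :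
    ⨍ x in (0 : ℝ)..T₁, flux (p₁ x) = ⨍ x in (0 : ℝ)..T₂, flux (p₂ x) := by
  have hC₁ := (h₁.comp_continuous hT₁ hpotential).eq_average_of_hasDerivAt
    (h₁.comp_continuous hT₁ hflux) hT₁ (tendsto_atBot_add_const_right _ _ tendsto_id)
    (hflux.comp ha) hder
  have hC₂ := (h₂.comp_continuous hT₂ hpotential).eq_average_of_hasDerivAt
    (h₂.comp_continuous hT₂ hflux) hT₂ (tendsto_atTop_add_const_right _ _ tendsto_id)
    (hflux.comp ha) hder
  exact hC₁.symm.trans hC₂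

theorem periodic_iteratedDeriv {𝕜 F : Type*} [NontriviallyNormedField 𝕜] [NormedAddCommGroup F]
    [NormedSpace 𝕜 F] {φ : 𝕜 → F} {T : 𝕜} (hφ : Periodic φ T) (n : ℕ) :
    Periodic (iteratedDeriv n φ) T := fun x => by
  rw [← congrFun (iteratedDeriv_comp_add_const n φ T) x, funext hφ]

theorem iteratedDeriv_comp_mul_sub {𝕜 : Type*} [NontriviallyNormedField 𝕜] {φ : 𝕜 → 𝕜} {n : ℕ}
    (hφ : ContDiff 𝕜 n φ) (k θ : 𝕜) :
    iteratedDeriv n (fun x => φ (k * x - θ)) = fun x => k ^ n * iteratedDeriv n φ (k * x - θ) := by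
  have hshift : ContDiff 𝕜 n (fun z => φ (z - θ)) := hφ.comp (contDiff_id.sub contDiff_const)
  rw [iteratedDeriv_comp_const_mul hshift k, iteratedDeriv_comp_sub_const]

theorem periodic_comp_mul_sub {𝕜 α : Type*} [Field 𝕜] {φ : 𝕜 → α} {T : 𝕜} (hφ : Periodic φ T)
    (k θ : 𝕜) : Periodic (fun x => φ (k * x - θ)) (T / k) := by
  simpa only [div_eq_inv_mul] using (hφ.sub_const θ).const_mul k

theorem average_comp_mul_sub {F : Type*} [NormedAddCommGroup F] [NormedSpace ℝ F] {φ : ℝ → F}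
    {k T : ℝ} (hk : k ≠ 0) (hφ : Periodic φ T) (θ : ℝ) :
    ⨍ x in (0 : ℝ)..(T / k), φ (k * x - θ) = ⨍ y in (0 : ℝ)..T, φ y := by
  have hendpoint : k * (T / k) - θ = k * 0 - θ + T := by field_simp; ring
  have hscale : (T / k - 0)⁻¹ * k⁻¹ = (T - 0)⁻¹ := by
    rw [sub_zero, sub_zero, inv_div, div_mul_eq_mul_div, mul_inv_cancel₀ hk, one_div]
  rw [interval_average_eq, interval_average_eq, intervalIntegral.integral_comp_mul_sub _ hk,
    hendpoint, hφ.intervalIntegral_add_eq (k * 0 - θ) 0, zero_add, smul_smul, hscale]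

/-- The 3-jet `(f, f', f'', f''')` of `f`, on which the fluxes of the KdV5 equation depend. -/
noncomputable def jet (f : ℝ → ℝ) (x : ℝ) (j : Fin 4) : ℝ := iteratedDeriv j f x

theorem continuous_jet {f : ℝ → ℝ} (hf : ContDiff ℝ 3 f) : Continuous (jet f) :=
  continuous_pi fun j => hf.continuous_iteratedDeriv j (by exact_mod_cast j.is_le)

theorem periodic_jet {f : ℝ → ℝ} {T : ℝ} (hf : Periodic f T) : Periodic (jet f) T := fun x =>
  funext fun j => periodic_iteratedDeriv hf j x

theorem asympPeriodic_jet_wave {f φ : ℝ → ℝ} {l : Filter ℝ} {T : ℝ} (k θ : ℝ)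
    (hφ : ContDiff ℝ 3 φ) (hper : Periodic φ T)
    (hlim : ∀ j : ℕ, j ≤ 3 → Tendsto
      (fun ξ => iteratedDeriv j f ξ - iteratedDeriv j (fun x => φ (k * x - θ)) ξ) l (𝓝 0)) :
    AsympPeriodic (T / k) l (jet f) (jet fun x => φ (k * x - θ)) where
  continuous := continuous_jet (hφ.comp (by fun_prop))
  periodic := periodic_jet (periodic_comp_mul_sub hper k θ)
  tendsto := tendsto_pi_nhds.2 fun j => hlim j j.is_le

/-- The flux of the density `f` in the frame moving with speed `c`, as a function of the 3-jet,
up to the derivative of `f'''`. -/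
noncomputable def massFlux (c : ℝ) (u : Fin 4 → ℝ) : ℝ := -c * u 0 + 1 / 2 * u 0 ^ 2

/-- The flux of the density `f² / 2` in the frame moving with speed `c`, as a function of the
3-jet, up to the derivative of `momentumPotential`. -/
noncomputable def momentumFlux (c : ℝ) (u : Fin 4 → ℝ) : ℝ :=
  -(c / 2) * u 0 ^ 2 + 1 / 3 * u 0 ^ 3 + 5 / 2 * u 2 ^ 2

/-- The quantity `f f''' - 2 f' f''` whose derivative is dropped from the momentum flux
`-c f² / 2 + f³ / 3 + f f⁗ - f' f''' + f''² / 2` so that only the averaged terms remain. -/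
def momentumPotential (u : Fin 4 → ℝ) : ℝ := u 0 * u 3 - 2 * (u 1 * u 2)

theorem continuous_massFlux (c : ℝ) : Continuous (massFlux c) := by
  unfold massFlux
  fun_prop

theorem continuous_momentumFlux (c : ℝ) : Continuous (momentumFlux c) := by
  unfold momentumFlux
  fun_prop

theorem continuous_momentumPotential : Continuous momentumPotential := by
  unfold momentumPotential
  fun_prop

section WaveAverages

variable {φ : ℝ → ℝ} {k T : ℝ}

theorem average_massFlux_wave (c θ : ℝ) (hk : k ≠ 0) (hφ : Continuous φ) (hper : Periodic φ T) :
    ⨍ x in (0 : ℝ)..(T / k), massFlux c (jet (fun x => φ (k * x - θ)) x)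
      = -c * (⨍ y in (0 : ℝ)..T, φ y) + 1 / 2 * ⨍ y in (0 : ℝ)..T, φ y ^ 2 := by
  have hpull : ∀ x, massFlux c (jet (fun x => φ (k * x - θ)) x)
      = (fun y => -c * φ y + 1 / 2 * φ y ^ 2) (k * x - θ) := fun x => by
    simp [massFlux, jet]
  have hperiodic : Periodic (fun y => -c * φ y + 1 / 2 * φ y ^ 2) T :=
    hper.comp fun u => -c * u + 1 / 2 * u ^ 2
  simp only [hpull]
  rw [average_comp_mul_sub hk hperiodic]
  simp only [interval_average_eq, smul_eq_mul]
  rw [intervalIntegral.integral_add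
      (Continuous.intervalIntegrable (by fun_prop) _ _)
      (Continuous.intervalIntegrable (by fun_prop) _ _),
    intervalIntegral.integral_const_mul, intervalIntegral.integral_const_mul]
  ring

theorem average_momentumFlux_wave (c θ : ℝ) (hk : k ≠ 0) (hφ : ContDiff ℝ 2 φ)
    (hper : Periodic φ T) :
    ⨍ x in (0 : ℝ)..(T / k), momentumFlux c (jet (fun x => φ (k * x - θ)) x)
      = -(c / 2) * (⨍ y in (0 : ℝ)..T, φ y ^ 2) + 1 / 3 * (⨍ y in (0 : ℝ)..T, φ y ^ 3)
        + 5 / 2 * (k ^ 4 * ⨍ y in (0 : ℝ)..T, iteratedDeriv 2 φ y ^ 2) := by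
  have hpull : ∀ x, momentumFlux c (jet (fun x => φ (k * x - θ)) x)
      = (fun y => -(c / 2) * φ y ^ 2 + 1 / 3 * φ y ^ 3
          + 5 / 2 * (k ^ 4 * iteratedDeriv 2 φ y ^ 2)) (k * x - θ) := fun x => by
    have hsecond := congrFun (iteratedDeriv_comp_mul_sub (n := 2) hφ k θ) x
    simp only [momentumFlux, jet, Fin.val_zero, Fin.val_two, iteratedDeriv_zero, hsecond]
    ring
  have hperiodic : Periodic (fun y => -(c / 2) * φ y ^ 2 + 1 / 3 * φ y ^ 3
      + 5 / 2 * (k ^ 4 * iteratedDeriv 2 φ y ^ 2)) T := fun y => by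
    simp only [hper y, periodic_iteratedDeriv hper 2 y]
  simp only [hpull]
  rw [average_comp_mul_sub hk hperiodic]
  simp only [interval_average_eq, smul_eq_mul]
  rw [intervalIntegral.integral_add
      (Continuous.intervalIntegrable (by fun_prop) _ _)
      (Continuous.intervalIntegrable (by fun_prop) _ _),
    intervalIntegral.integral_add
      (Continuous.intervalIntegrable (by fun_prop) _ _)
      (Continuous.intervalIntegrable (by fun_prop) _ _)]
  simp only [intervalIntegral.integral_const_mul]
  ring

end WaveAverages

theorem hasDerivAt_iteratedDeriv {𝕜 F : Type*} [NontriviallyNormedField 𝕜] [NormedAddCommGroup F]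
    [NormedSpace 𝕜 F] {g : 𝕜 → F} {n j : ℕ} (hg : ContDiff 𝕜 n g) (hj : j < n) (x : 𝕜) :
    HasDerivAt (iteratedDeriv j g) (iteratedDeriv (j + 1) g x) x := by
  rw [iteratedDeriv_succ]
  exact (hg.differentiable_iteratedDeriv j (by exact_mod_cast hj) x).hasDerivAt

theorem exists_forall_eq_of_hasDerivAt_zero {𝕜 F : Type*} [RCLike 𝕜] [NormedAddCommGroup F]
    [NormedSpace 𝕜 F] {g : 𝕜 → F} (hg : ∀ x, HasDerivAt g 0 x) : ∃ C, ∀ x, g x = C :=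
  ⟨g 0, fun x => is_const_of_deriv_eq_zero (fun y => (hg y).differentiableAt)
    (fun y => (hg y).deriv) x 0⟩

/-- A `C⁵` traveling-wave profile of the KdV5 equation `u_t + u u_x + u_xxxxx = 0` with
speed `c`. -/
structure IsKdV5Profile (c : ℝ) (f : ℝ → ℝ) : Prop where
  contDiff : ContDiff ℝ 5 f
  ode : ∀ ξ, -c * deriv f ξ + f ξ * deriv f ξ + iteratedDeriv 5 f ξ = 0

namespace IsKdV5Profile

variable {c : ℝ} {f : ℝ → ℝ}

theorem exists_mass_firstIntegral (hf : IsKdV5Profile c f) :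
    ∃ A, ∀ x, iteratedDeriv 4 f x + (-c * f x + 1 / 2 * f x ^ 2) = A := by
  refine exists_forall_eq_of_hasDerivAt_zero fun x => ?_
  have d0 : HasDerivAt f (deriv f x) x :=
    (hf.contDiff.differentiable (by norm_num) x).hasDerivAt
  have d4 := hasDerivAt_iteratedDeriv (j := 4) hf.contDiff (by norm_num) x
  refine (d4.add ((d0.const_mul (-c)).add ((d0.pow 2).const_mul (1 / 2)))).congr_deriv ?_
  simp only [Nat.cast_ofNat, Nat.reduceAdd, Nat.reduceSub]
  linear_combination hf.ode x

/-- The profile equation multiplied by `f`, integrated once. -/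
theorem exists_momentum_firstIntegral (hf : IsKdV5Profile c f) :
    ∃ B, ∀ x, f x * iteratedDeriv 4 f x - iteratedDeriv 1 f x * iteratedDeriv 3 f x
      + 1 / 2 * iteratedDeriv 2 f x ^ 2 + (-(c / 2) * f x ^ 2 + 1 / 3 * f x ^ 3) = B := by
  refine exists_forall_eq_of_hasDerivAt_zero fun x => ?_
  have d0 : HasDerivAt f (deriv f x) x :=
    (hf.contDiff.differentiable (by norm_num) x).hasDerivAt
  have d1 := hasDerivAt_iteratedDeriv (j := 1) hf.contDiff (by norm_num) x
  have d2 := hasDerivAt_iteratedDeriv (j := 2) hf.contDiff (by norm_num) x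
  have d3 := hasDerivAt_iteratedDeriv (j := 3) hf.contDiff (by norm_num) x
  have d4 := hasDerivAt_iteratedDeriv (j := 4) hf.contDiff (by norm_num) x
  refine ((((d0.mul d4).sub (d1.mul d3)).add ((d2.pow 2).const_mul (1 / 2))).add
    (((d0.pow 2).const_mul (-(c / 2))).add ((d0.pow 3).const_mul (1 / 3)))).congr_deriv ?_
  simp only [Nat.cast_ofNat, Nat.reduceAdd, Nat.reduceSub, iteratedDeriv_one]
  linear_combination f x * hf.ode x

theorem exists_hasDerivAt_sub_massFlux (hf : IsKdV5Profile c f) :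
    ∃ A, ∀ x, HasDerivAt ((fun u => u 3) ∘ jet f) (A - massFlux c (jet f x)) x := by
  obtain ⟨A, hA⟩ := hf.exists_mass_firstIntegral
  refine ⟨A, fun x =>
    (hasDerivAt_iteratedDeriv (j := 3) hf.contDiff (by norm_num) x).congr_deriv ?_⟩
  simp only [massFlux, jet, Fin.val_zero, iteratedDeriv_zero]
  linear_combination hA x

theorem exists_hasDerivAt_sub_momentumFlux (hf : IsKdV5Profile c f) :
    ∃ B, ∀ x, HasDerivAt (momentumPotential ∘ jet f) (B - momentumFlux c (jet f x)) x := by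
  obtain ⟨B, hB⟩ := hf.exists_momentum_firstIntegral
  refine ⟨B, fun x => ?_⟩
  have d0 := hasDerivAt_iteratedDeriv (j := 0) hf.contDiff (by norm_num) x
  have d1 := hasDerivAt_iteratedDeriv (j := 1) hf.contDiff (by norm_num) x
  have d2 := hasDerivAt_iteratedDeriv (j := 2) hf.contDiff (by norm_num) x
  have d3 := hasDerivAt_iteratedDeriv (j := 3) hf.contDiff (by norm_num) x
  refine ((d0.mul d3).sub ((d1.mul d2).const_mul 2)).congr_deriv ?_
  simp only [momentumFlux, jet, Fin.val_zero, Fin.val_two, iteratedDeriv_zero]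
  linear_combination hB x

end IsKdV5Profile

/-- Main theorem: a C⁵ traveling-wave profile `f` of the KdV5 equation with speed `c`
that asymptotes (together with its derivatives up to order 3) to the periodic waves
`ξ ↦ φ₋(k₋ ξ - θ₋)` as `ξ → -∞` and `ξ ↦ φ₊(k₊ ξ - θ₊)` as `ξ → +∞` has far fields
satisfying the Rankine–Hugoniot jump conditions of the KdV5-Whitham modulation
equations with shock speed `V = c`. Here `km, θm, φm` (resp. `kp, θp, φp`) denote
`k₋, θ₋, φ₋` (resp. `k₊, θ₊, φ₊`), and the period average of a 2π-periodic `g` is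
`avg g = (1/(2π)) ∫₀^{2π} g`. -/
theorem stmt0 (c km kp θm θp : ℝ) (hkm : 0 < km) (hkp : 0 < kp)
    (f φm φp : ℝ → ℝ)
    (hf : ContDiff ℝ 5 f)
    (hode : ∀ ξ : ℝ, -c * deriv f ξ + f ξ * deriv f ξ + iteratedDeriv 5 f ξ = 0)
    (hφm : ContDiff ℝ 4 φm) (hφp : ContDiff ℝ 4 φp)
    (hpm : Function.Periodic φm (2 * Real.pi))
    (hpp : Function.Periodic φp (2 * Real.pi))
    (hlimm : ∀ j : ℕ, j ≤ 3 →
      Filter.Tendsto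
        (fun ξ : ℝ => iteratedDeriv j f ξ
          - iteratedDeriv j (fun x => φm (km * x - θm)) ξ)
        Filter.atBot (nhds 0))
    (hlimp : ∀ j : ℕ, j ≤ 3 →
      Filter.Tendsto
        (fun ξ : ℝ => iteratedDeriv j f ξ
          - iteratedDeriv j (fun x => φp (kp * x - θp)) ξ)
        Filter.atTop (nhds 0)) :
    let avg : (ℝ → ℝ) → ℝ := fun g => (1/(2 * Real.pi)) * ∫ θ in (0:ℝ)..(2 * Real.pi), g θ
    -- (i) jump of mass
    (-c * (avg φm - avg φp)
        + (1/2) * (avg (fun θ => φm θ ^ 2) - avg (fun θ => φp θ ^ 2)) = 0) ∧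
    -- (ii) jump of momentum
    (-(c/2) * (avg (fun θ => φm θ ^ 2) - avg (fun θ => φp θ ^ 2))
        + (1/3) * (avg (fun θ => φm θ ^ 3) - avg (fun θ => φp θ ^ 3))
        + (5/2) * (km ^ 4 * avg (fun θ => (iteratedDeriv 2 φm θ) ^ 2)
            - kp ^ 4 * avg (fun θ => (iteratedDeriv 2 φp θ) ^ 2)) = 0) ∧
    -- (iii) conservation of waves (with V = c and phase speeds c₋ = c₊ = c)
    (-c * (km - kp) + (c * km - c * kp) = 0) := by
  intro avg
  have havg : avg = fun g => ⨍ θ in (0 : ℝ)..(2 * Real.pi), g θ := funext fun g => by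
    simp only [avg, interval_average_eq, sub_zero, one_div, smul_eq_mul]
  have hf' : IsKdV5Profile c f := ⟨hf, hode⟩
  have hjet : Continuous (jet f) := continuous_jet (hf.of_le (by norm_num))
  have hTm : 2 * Real.pi / km ≠ 0 := by positivity
  have hTp : 2 * Real.pi / kp ≠ 0 := by positivity
  have hm := asympPeriodic_jet_wave km θm (hφm.of_le (by norm_num)) hpm hlimm
  have hp := asympPeriodic_jet_wave kp θp (hφp.of_le (by norm_num)) hpp hlimp
  obtain ⟨A, hA⟩ := hf'.exists_hasDerivAt_sub_massFlux
  obtain ⟨B, hB⟩ := hf'.exists_hasDerivAt_sub_momentumFlux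
  have hmass := average_flux_eq_of_asympPeriodic hTm hTp hm hp hjet
    (continuous_apply 3) (continuous_massFlux c) hA
  have hmomentum := average_flux_eq_of_asympPeriodic hTm hTp hm hp hjet
    continuous_momentumPotential (continuous_momentumFlux c) hB
  rw [average_massFlux_wave c θm hkm.ne' hφm.continuous hpm,
    average_massFlux_wave c θp hkp.ne' hφp.continuous hpp] at hmass
  rw [average_momentumFlux_wave c θm hkm.ne' (hφm.of_le (by norm_num)) hpm,
    average_momentumFlux_wave c θp hkp.ne' (hφp.of_le (by norm_num)) hpp] at hmomentum
  simp only [havg]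
  exact ⟨by linear_combination hmass, by linear_combination hmomentum, by ring⟩
end

section
/- Let c, A ∈ ℝ, k > 0, and let φ : ℝ → ℝ be a 2π-periodic C⁴ function satisfying k⁴ φ''''(θ) + (1/2) φ(θ)² − c φ(θ) − A/2 = 0 for all θ ∈ ℝ. Then the quantity k⁴ φ'''(θ) φ'(θ) − (k⁴/2)(φ''(θ))² + (1/6) φ(θ)³ − (c/2) φ(θ)² − (A/2) φ(θ) is equal to a constant −B independent of θ, and this constant satisfies (c/2) · (period average of φ²) − (1/3) · (period average of φ³) − (5/2) k⁴ · (period average of (φ'')²) = −B. -/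
/-!
More generally, let `κ φ'''' + V'(φ) = 0` with `φ` periodic. The derivative of
`κ φ''' φ' - (κ/2) (φ'')² + V(φ)` is `φ'` times the left-hand side of this equation, so that
quantity is constant, hence equal to its average. By parts, `⟨φ''' φ'⟩ = -⟨(φ'')²⟩`, which turns
the average into `⟨V(φ)⟩ - (3/2) κ ⟨(φ'')²⟩`. Multiplying the equation by `φ` and integrating by
parts twice gives `κ ⟨(φ'')²⟩ = -⟨φ V'(φ)⟩`, so the average is also
`⟨V(φ) - φ V'(φ)⟩ - (5/2) κ ⟨(φ'')²⟩`. For `V = φ³/6 - (c/2) φ² - (A/2) φ` the linear terms cancel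
in `V(φ) - φ V'(φ)`.
-/

open intervalIntegral

section IteratedDeriv

variable {𝕜 F : Type*} [NontriviallyNormedField 𝕜] [NormedAddCommGroup F] [NormedSpace 𝕜 F]
  {f : 𝕜 → F}

theorem periodic_iteratedDeriv_s6 {T : 𝕜} (hf : Function.Periodic f T) (n : ℕ) :
    Function.Periodic (iteratedDeriv n f) T := fun x => by
  have h := congrFun (iteratedDeriv_comp_add_const n f T) x
  rwa [funext hf, eq_comm] at h

theorem hasDerivAt_iteratedDeriv_s6 {n : ℕ} (hf : ContDiff 𝕜 (n + 1) f) (x : 𝕜) :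
    HasDerivAt (iteratedDeriv n f) (iteratedDeriv (n + 1) f x) x := by
  rw [iteratedDeriv_succ]
  exact (hf.differentiable_iteratedDeriv' n x).hasDerivAt

end IteratedDeriv

section PeriodicIntegral

variable {𝔸 : Type*} [NormedRing 𝔸] [NormedAlgebra ℝ 𝔸] [CompleteSpace 𝔸] {f g : ℝ → 𝔸} {T : ℝ}

theorem integral_iteratedDeriv_mul_iteratedDeriv_succ_of_periodic {m n : ℕ}
    (hf : ContDiff ℝ (m + 1) f) (hg : ContDiff ℝ (n + 1) g)
    (hfT : Function.Periodic f T) (hgT : Function.Periodic g T) (a : ℝ) :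
    ∫ x in a..a + T, iteratedDeriv m f x * iteratedDeriv (n + 1) g x =
      -∫ x in a..a + T, iteratedDeriv (m + 1) f x * iteratedDeriv n g x := by
  have hparts := integral_mul_deriv_eq_deriv_mul (a := a) (b := a + T)
    (fun x _ => hasDerivAt_iteratedDeriv_s6 hf x) (fun x _ => hasDerivAt_iteratedDeriv_s6 hg x)
    ((hf.continuous_iteratedDeriv' (m + 1)).intervalIntegrable _ _)
    ((hg.continuous_iteratedDeriv' (n + 1)).intervalIntegrable _ _)
  rwa [periodic_iteratedDeriv_s6 hfT m a, periodic_iteratedDeriv_s6 hgT n a, sub_self, zero_sub] at hparts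

theorem integral_iteratedDeriv_three_mul_deriv_of_periodic (hf : ContDiff ℝ 3 f)
    (hfT : Function.Periodic f T) (a : ℝ) :
    ∫ x in a..a + T, iteratedDeriv 3 f x * deriv f x =
      -∫ x in a..a + T, iteratedDeriv 2 f x ^ 2 := by
  have hparts := integral_iteratedDeriv_mul_iteratedDeriv_succ_of_periodic (m := 2) (n := 1)
    hf (hf.of_le (by norm_num)) hfT hfT a
  simp only [sq, ← iteratedDeriv_one]
  exact (neg_eq_iff_eq_neg.mpr hparts).symm

theorem integral_mul_iteratedDeriv_four_of_periodic (hf : ContDiff ℝ 4 f)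
    (hfT : Function.Periodic f T) (a : ℝ) :
    ∫ x in a..a + T, f x * iteratedDeriv 4 f x = ∫ x in a..a + T, iteratedDeriv 2 f x ^ 2 := by
  have hparts₀ := integral_iteratedDeriv_mul_iteratedDeriv_succ_of_periodic (m := 0) (n := 3)
    (hf.of_le (by norm_num)) hf hfT hfT a
  have hparts₁ := integral_iteratedDeriv_mul_iteratedDeriv_succ_of_periodic (m := 1) (n := 2)
    (hf.of_le (by norm_num)) (hf.of_le (by norm_num)) hfT hfT a
  simp only [iteratedDeriv_zero, zero_add, Nat.reduceAdd] at hparts₀ hparts₁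
  simp only [hparts₀, hparts₁, neg_neg, sq]

end PeriodicIntegral

/-- The first integral `κ φ''' φ' - (κ/2) (φ'')² + V(φ)` of `κ φ'''' + V'(φ) = 0`. It is minus the
Ostrogradsky energy of the Lagrangian `(κ/2) (φ'')² + V(φ)`. -/
noncomputable def firstIntegral (κ : ℝ) (V φ : ℝ → ℝ) (θ : ℝ) : ℝ :=
  κ * iteratedDeriv 3 φ θ * deriv φ θ - κ / 2 * iteratedDeriv 2 φ θ ^ 2 + V (φ θ)

section FirstIntegral

variable {κ T : ℝ} {V V' φ : ℝ → ℝ}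

theorem hasDerivAt_firstIntegral {θ v : ℝ} (hφ : ContDiff ℝ 4 φ) (hV : HasDerivAt V v (φ θ)) :
    HasDerivAt (firstIntegral κ V φ) (deriv φ θ * (κ * iteratedDeriv 4 φ θ + v)) θ := by
  have h₀ : HasDerivAt φ (deriv φ θ) θ := (hφ.differentiable (by norm_num) θ).hasDerivAt
  have h₁ : HasDerivAt (deriv φ) (iteratedDeriv 2 φ θ) θ := by
    simpa only [iteratedDeriv_one] using
      hasDerivAt_iteratedDeriv_s6 (n := 1) (hφ.of_le (by norm_num)) θ
  have h₂ : HasDerivAt (iteratedDeriv 2 φ) (iteratedDeriv 3 φ θ) θ :=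
    hasDerivAt_iteratedDeriv_s6 (hφ.of_le (by norm_num)) θ
  have h₃ : HasDerivAt (iteratedDeriv 3 φ) (iteratedDeriv 4 φ θ) θ :=
    hasDerivAt_iteratedDeriv_s6 hφ θ
  refine ((((h₃.const_mul κ).mul h₁).sub ((h₂.pow 2).const_mul (κ / 2))).add
    (hV.comp θ h₀)).congr_deriv ?_
  ring

theorem firstIntegral_eq_firstIntegral (hφ : ContDiff ℝ 4 φ) (hV : ∀ x, HasDerivAt V (V' x) x)
    (hode : ∀ θ, κ * iteratedDeriv 4 φ θ + V' (φ θ) = 0) (θ₁ θ₂ : ℝ) :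
    firstIntegral κ V φ θ₁ = firstIntegral κ V φ θ₂ := by
  have hderiv (θ : ℝ) : HasDerivAt (firstIntegral κ V φ) 0 θ := by
    simpa only [hode θ, mul_zero] using hasDerivAt_firstIntegral (κ := κ) hφ (hV (φ θ))
  exact is_const_of_deriv_eq_zero (fun θ => (hderiv θ).differentiableAt)
    (fun θ => (hderiv θ).deriv) θ₁ θ₂

theorem integral_firstIntegral_of_periodic (hφ : ContDiff ℝ 3 φ) (hper : Function.Periodic φ T)
    (hV : Continuous V) (a : ℝ) :
    ∫ θ in a..a + T, firstIntegral κ V φ θ =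
      (∫ θ in a..a + T, V (φ θ)) - 3 / 2 * κ * ∫ θ in a..a + T, iteratedDeriv 2 φ θ ^ 2 := by
  have h₀ : Continuous φ := hφ.continuous
  have h₁ : Continuous (deriv φ) := hφ.continuous_deriv (by norm_num)
  have h₂ : Continuous (iteratedDeriv 2 φ) := hφ.continuous_iteratedDeriv 2 (by norm_num)
  simp only [firstIntegral, mul_assoc]
  rw [integral_add (Continuous.intervalIntegrable (by fun_prop) _ _)
      (Continuous.intervalIntegrable (by fun_prop) _ _),
    integral_sub (Continuous.intervalIntegrable (by fun_prop) _ _)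
      (Continuous.intervalIntegrable (by fun_prop) _ _),
    integral_const_mul, integral_const_mul,
    integral_iteratedDeriv_three_mul_deriv_of_periodic hφ hper]
  ring

theorem mul_integral_iteratedDeriv_two_sq_of_periodic (hφ : ContDiff ℝ 4 φ)
    (hper : Function.Periodic φ T) (hode : ∀ θ, κ * iteratedDeriv 4 φ θ + V' (φ θ) = 0) (a : ℝ) :
    κ * ∫ θ in a..a + T, iteratedDeriv 2 φ θ ^ 2 = -∫ θ in a..a + T, φ θ * V' (φ θ) := by
  rw [← integral_mul_iteratedDeriv_four_of_periodic hφ hper, ← integral_const_mul,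
    ← intervalIntegral.integral_neg]
  refine integral_congr fun θ _ => ?_
  linear_combination φ θ * hode θ

theorem stmt6_general (hφ : ContDiff ℝ 4 φ) (hper : Function.Periodic φ T)
    (hV : ∀ x, HasDerivAt V (V' x) x) (hode : ∀ θ, κ * iteratedDeriv 4 φ θ + V' (φ θ) = 0) (a : ℝ) :
    ∃ B : ℝ, (∀ θ, firstIntegral κ V φ θ = -B) ∧
      (∫ θ in a..a + T, (V (φ θ) - φ θ * V' (φ θ))) -
        5 / 2 * κ * ∫ θ in a..a + T, iteratedDeriv 2 φ θ ^ 2 = T * -B := by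
  obtain ⟨B, hconst⟩ : ∃ B : ℝ, ∀ θ, firstIntegral κ V φ θ = -B :=
    ⟨-firstIntegral κ V φ 0, fun θ =>
      (firstIntegral_eq_firstIntegral hφ hV hode θ 0).trans (neg_neg _).symm⟩
  refine ⟨B, hconst, ?_⟩
  have hVcont : Continuous V := continuous_iff_continuousAt.2 fun x => (hV x).continuousAt
  have hmulcont : Continuous fun θ => φ θ * V' (φ θ) := by
    simp only [fun θ => eq_neg_of_add_eq_zero_right (hode θ)]
    exact hφ.continuous.mul ((hφ.continuous_iteratedDeriv' 4).const_mul κ).neg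
  have haverage := integral_firstIntegral_of_periodic (κ := κ) (hφ.of_le (by norm_num)) hper
    hVcont a
  simp only [hconst, intervalIntegral.integral_const, add_sub_cancel_left, smul_eq_mul] at haverage
  rw [integral_sub (Continuous.intervalIntegrable (by fun_prop) _ _)
    (hmulcont.intervalIntegrable _ _)]
  linear_combination -haverage - mul_integral_iteratedDeriv_two_sq_of_periodic hφ hper hode a

end FirstIntegral

/-- The potential of the KdV5 profile equation: with `V = profilePotential c A`, that equation reads
`k⁴ φ'''' + V'(φ) = 0`. The constant of integration is chosen so that `V(0) = 0`. -/
noncomputable def profilePotential (c A x : ℝ) : ℝ :=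
  1 / 6 * x ^ 3 - c / 2 * x ^ 2 - A / 2 * x

theorem hasDerivAt_profilePotential (c A x : ℝ) :
    HasDerivAt (profilePotential c A) (1 / 2 * x ^ 2 - c * x - A / 2) x := by
  refine ((((hasDerivAt_pow 3 x).const_mul (1 / 6)).sub
    ((hasDerivAt_pow 2 x).const_mul (c / 2))).sub
    ((hasDerivAt_id x).const_mul (A / 2))).congr_deriv ?_
  ring

theorem integral_profilePotential_sub_mul (c A : ℝ) {φ : ℝ → ℝ} (hφ : Continuous φ) (a b : ℝ) :
    ∫ θ in a..b, (profilePotential c A (φ θ) - φ θ * (1 / 2 * φ θ ^ 2 - c * φ θ - A / 2)) =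
      c / 2 * (∫ θ in a..b, φ θ ^ 2) - 1 / 3 * ∫ θ in a..b, φ θ ^ 3 := by
  rw [← integral_const_mul, ← integral_const_mul, ← integral_sub
    (Continuous.intervalIntegrable (by fun_prop) _ _)
    (Continuous.intervalIntegrable (by fun_prop) _ _)]
  refine integral_congr fun θ _ => ?_
  simp only [profilePotential]
  ring

/-- For a 2π-periodic C⁴ solution `φ` of `k⁴ φ'''' + (1/2) φ² - c φ - A/2 = 0`, the
quantity `k⁴ φ''' φ' - (k⁴/2)(φ'')² + (1/6) φ³ - (c/2) φ² - (A/2) φ` equals a constant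
`-B`, and `(c/2)⟨φ²⟩ - (1/3)⟨φ³⟩ - (5/2) k⁴ ⟨(φ'')²⟩ = -B`. -/
theorem stmt6 (c A k : ℝ) (hk : 0 < k) (φ : ℝ → ℝ) (hφ : ContDiff ℝ 4 φ)
    (hper : Function.Periodic φ (2 * Real.pi))
    (hode : ∀ θ : ℝ,
      k ^ 4 * iteratedDeriv 4 φ θ + (1/2) * φ θ ^ 2 - c * φ θ - A/2 = 0) :
    ∃ B : ℝ,
      (∀ θ : ℝ,
        k ^ 4 * iteratedDeriv 3 φ θ * deriv φ θ
          - (k ^ 4 / 2) * (iteratedDeriv 2 φ θ) ^ 2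
          + (1/6) * φ θ ^ 3 - (c/2) * φ θ ^ 2 - (A/2) * φ θ = -B) ∧
      (c/2) * ((1/(2 * Real.pi)) * ∫ θ in (0:ℝ)..(2 * Real.pi), φ θ ^ 2)
        - (1/3) * ((1/(2 * Real.pi)) * ∫ θ in (0:ℝ)..(2 * Real.pi), φ θ ^ 3)
        - (5/2) * k ^ 4 *
            ((1/(2 * Real.pi)) * ∫ θ in (0:ℝ)..(2 * Real.pi), (iteratedDeriv 2 φ θ) ^ 2)
        = -B := by
  obtain ⟨B, hconst, hint⟩ := stmt6_general (κ := k ^ 4) hφ hper (hasDerivAt_profilePotential c A)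
    (fun θ => by linear_combination hode θ) 0
  refine ⟨B, fun θ => ?_, ?_⟩
  · rw [← hconst θ, firstIntegral, profilePotential]
    ring
  · rw [zero_add, integral_profilePotential_sub_mul c A hφ.continuous] at hint
    field_simp
    linear_combination 6 * hint
end

section
/- Fix ū ∈ ℝ and k > 0. For a > 0 define the truncated Stokes wave φ_a(θ) = ū + (a/2) cos θ − (a²/(240 k⁴)) cos 2θ and the Stokes phase speed c_a = ū + k⁴ − a²/(480 k⁴). Then there exists a constant C > 0 (depending only on ū and k) such that for all a ∈ (0,1] and all θ ∈ ℝ, the traveling-wave residual satisfies |−c_a φ_a'(θ) + φ_a(θ) φ_a'(θ) + k⁴ φ_a⁽⁵⁾(θ)| ≤ C a³; i.e., the Stokes approximation solves the profile equation up to errors of order a³. -/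
/-!
For any profile `u + A cos θ + B cos 2θ` and any speed `c`, the product-to-sum formulas turn the
residual into a sine polynomial of degree four. At `A = a / 2` and `B = -b`, where
`b = a² / (240 k⁴)`, the speed correction `-b / 2` kills the `sin θ` coefficient exactly, and
`30 k⁴ b = a² / 8` kills the part of order `a²` of the `sin 2θ` coefficient. What remains is
`(3/4) a b sin 3θ + b² (sin 2θ - sin 4θ)`.
-/

open Real

/-- The left-hand side `-c φ' + φ φ' + k⁴ φ⁽⁵⁾` of the KdV5 profile equation, which vanishes
identically when `φ` is an exact traveling wave of wavenumber `k` and speed `c`. The equation has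
been divided by `k`, hence the factor `k⁴` rather than `k⁵`. -/
noncomputable def kdv5Residual (k c : ℝ) (φ : ℝ → ℝ) (θ : ℝ) : ℝ :=
  -c * deriv φ θ + φ θ * deriv φ θ + k ^ 4 * iteratedDeriv 5 φ θ

/-- The even profile with mean `u` and first two harmonics of amplitudes `A` and `B`. -/
noncomputable def twoModeWave (u A B t : ℝ) : ℝ := u + A * cos t + B * cos (2 * t)

/-- The Stokes wave of mean `u`, wavenumber `k` and amplitude parameter `a`, truncated after its
second harmonic: the paper's `φ_a`. -/
noncomputable def stokesWave (u k a t : ℝ) : ℝ :=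
  u + (a / 2) * cos t - (a ^ 2 / (240 * k ^ 4)) * cos (2 * t)

/-- The speed of the Stokes wave up to second order in the amplitude parameter: the paper's
`c_a`. -/
noncomputable def stokesSpeed (u k a : ℝ) : ℝ := u + k ^ 4 - a ^ 2 / (480 * k ^ 4)

theorem stokesWave_eq_twoModeWave (u k a : ℝ) :
    stokesWave u k a = twoModeWave u (a / 2) (-(a ^ 2 / (240 * k ^ 4))) := by
  ext t
  simp only [stokesWave, twoModeWave]
  ring

theorem iteratedDeriv_odd_cos_const_mul (n : ℕ) (m t : ℝ) :
    iteratedDeriv (2 * n + 1) (fun x => cos (m * x)) t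
      = (-1) ^ (n + 1) * m ^ (2 * n + 1) * sin (m * t) := by
  rw [iteratedDeriv_comp_const_mul contDiff_cos, iteratedDeriv_odd_cos]
  simp only [Pi.mul_apply, Pi.pow_apply, Pi.neg_apply, Pi.one_apply]
  ring

theorem iteratedDeriv_odd_twoModeWave (n : ℕ) (u A B t : ℝ) :
    iteratedDeriv (2 * n + 1) (twoModeWave u A B) t
      = (-1) ^ (n + 1) * (A * sin t + 2 ^ (2 * n + 1) * B * sin (2 * t)) := by
  have hwave : twoModeWave u A B
      = fun x => u + (A * cos x + B * cos (2 * x)) := funext fun x => add_assoc _ _ _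
  rw [hwave, iteratedDeriv_const_add (by omega), iteratedDeriv_fun_add (by fun_prop) (by fun_prop),
    iteratedDeriv_const_mul_field, iteratedDeriv_const_mul_field,
    iteratedDeriv_odd_cos_const_mul, iteratedDeriv_odd_cos]
  simp only [Pi.mul_apply, Pi.pow_apply, Pi.neg_apply, Pi.one_apply]
  ring

theorem deriv_twoModeWave (u A B t : ℝ) :
    deriv (twoModeWave u A B) t = -(A * sin t + 2 * B * sin (2 * t)) := by
  simpa [iteratedDeriv_one] using iteratedDeriv_odd_twoModeWave 0 u A B t

theorem kdv5Residual_twoModeWave (k c u A B θ : ℝ) :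
    kdv5Residual k c (twoModeWave u A B) θ
      = A * (c - u - k ^ 4 - B / 2) * sin θ
        + (2 * B * (c - u) - 32 * k ^ 4 * B - A ^ 2 / 2) * sin (2 * θ)
        - 3 / 2 * (A * B) * sin (3 * θ) - B ^ 2 * sin (4 * θ) := by
  have h11 : 2 * sin θ * cos θ = sin (2 * θ) := (sin_two_mul θ).symm
  have h22 : 2 * sin (2 * θ) * cos (2 * θ) = sin (4 * θ) := by
    rw [← sin_two_mul]; ring_nf
  have h21 : 2 * sin (2 * θ) * cos θ = sin θ + sin (3 * θ) := by
    rw [two_mul_sin_mul_cos]; ring_nf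
  have h12 : 2 * sin θ * cos (2 * θ) = -sin θ + sin (3 * θ) := by
    rw [two_mul_sin_mul_cos, ← sin_neg]; ring_nf
  rw [kdv5Residual, deriv_twoModeWave, iteratedDeriv_odd_twoModeWave 2, twoModeWave]
  linear_combination
    -(A ^ 2 / 2) * h11 - A * B * h21 - A * B / 2 * h12 - B ^ 2 * h22

theorem kdv5Residual_stokesWave (u : ℝ) {k : ℝ} (hk : k ≠ 0) (a θ : ℝ) :
    kdv5Residual k (stokesSpeed u k a) (stokesWave u k a) θ
      = a ^ 3 / (320 * k ^ 4) * sin (3 * θ)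
        + (a ^ 2 / (240 * k ^ 4)) ^ 2 * (sin (2 * θ) - sin (4 * θ)) := by
  rw [stokesWave_eq_twoModeWave, kdv5Residual_twoModeWave]
  set b := a ^ 2 / (240 * k ^ 4) with hb
  have hspeed : stokesSpeed u k a = u + k ^ 4 - b / 2 := by
    rw [stokesSpeed, hb]; ring
  have hamp : 30 * k ^ 4 * b = a ^ 2 / 8 := by
    rw [hb]; field_simp; ring
  have hcubic : a ^ 3 / (320 * k ^ 4) = 3 / 4 * a * b := by
    rw [hb]; ring
  rw [hspeed, hcubic]
  linear_combination sin (2 * θ) * hamp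

theorem stmt14_general (u : ℝ) {k : ℝ} (hk : k ≠ 0) (a θ : ℝ) :
    |kdv5Residual k (stokesSpeed u k a) (stokesWave u k a) θ|
      ≤ (1 / (320 * k ^ 4) + 2 * |a| / (240 * k ^ 4) ^ 2) * |a| ^ 3 := by
  have hdiff : |sin (2 * θ) - sin (4 * θ)| ≤ 1 + 1 :=
    (abs_sub _ _).trans (add_le_add (abs_sin_le_one _) (abs_sin_le_one _))
  rw [kdv5Residual_stokesWave u hk]
  calc |a ^ 3 / (320 * k ^ 4) * sin (3 * θ)
          + (a ^ 2 / (240 * k ^ 4)) ^ 2 * (sin (2 * θ) - sin (4 * θ))|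
      ≤ |a| ^ 3 / (320 * k ^ 4) * |sin (3 * θ)|
          + (|a| ^ 2 / (240 * k ^ 4)) ^ 2 * |sin (2 * θ) - sin (4 * θ)| := by
        refine (abs_add_le _ _).trans_eq ?_
        simp only [abs_mul, abs_div, abs_pow, Nat.abs_ofNat, Even.pow_abs (by decide : Even 4)]
    _ ≤ |a| ^ 3 / (320 * k ^ 4) * 1 + (|a| ^ 2 / (240 * k ^ 4)) ^ 2 * (1 + 1) := by
        gcongr
        exact abs_sin_le_one _
    _ = (1 / (320 * k ^ 4) + 2 * |a| / (240 * k ^ 4) ^ 2) * |a| ^ 3 := by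
        ring

/-- The truncated Stokes wave `φ_a(θ) = ū + (a/2) cos θ - (a²/(240 k⁴)) cos 2θ` with
phase speed `c_a = ū + k⁴ - a²/(480 k⁴)` solves the KdV5 profile equation
`-c φ' + φ φ' + k⁴ φ⁽⁵⁾ = 0` up to a residual of order `a³`, uniformly in `θ`. -/
theorem stmt14 (ub k : ℝ) (hk : 0 < k) :
    ∃ C : ℝ, 0 < C ∧ ∀ a : ℝ, 0 < a → a ≤ 1 → ∀ θ : ℝ,
      |(-(ub + k ^ 4 - a ^ 2 / (480 * k ^ 4)))
          * deriv (fun t => ub + (a/2) * Real.cos t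
              - (a ^ 2 / (240 * k ^ 4)) * Real.cos (2 * t)) θ
        + (ub + (a/2) * Real.cos θ - (a ^ 2 / (240 * k ^ 4)) * Real.cos (2 * θ))
          * deriv (fun t => ub + (a/2) * Real.cos t
              - (a ^ 2 / (240 * k ^ 4)) * Real.cos (2 * t)) θ
        + k ^ 4 * iteratedDeriv 5 (fun t => ub + (a/2) * Real.cos t
              - (a ^ 2 / (240 * k ^ 4)) * Real.cos (2 * t)) θ|
        ≤ C * a ^ 3 := by
  refine ⟨1 / (320 * k ^ 4) + 2 / (240 * k ^ 4) ^ 2, by positivity, fun a ha ha1 θ => ?_⟩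
  exact (stmt14_general ub hk.ne' a θ).trans (by rw [abs_of_pos ha]; gcongr; linarith)
end

section
/- Let ū ≠ 0, V ∈ ℝ and κ > 0 satisfy the weakly nonlinear solitary-wave-to-periodic jump conditions: (i) −V ū + ū²/2 − 1/16 = 0; (ii) −(V/2)(ū² − 1/8) + ū³/3 − (5/16) κ = 0; (iii) V = κ − 1/(480 κ). Then V = ū/2 − 1/(16 ū), κ = (4ū³ + 3ū)/15 − 1/(80 ū), and ū² is a root of the quartic polynomial 1024 y⁴ − 384 y³ − 720 y² + 168 y − 9 = 0. -/
/-!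
For `u, κ ≠ 0` the jump conditions form a triangular system: (i) is linear in `V`, and then (ii)
is linear in `κ`. After this both `u * V` and `u * κ` are polynomials in `u ^ 2`, while (iii),
cleared of its denominator, is an inhomogeneous quadratic relation between `κ` and `V`; multiplied
by `u ^ 2` it becomes a polynomial equation in `u ^ 2` alone.
-/

section JumpConditions

variable {K : Type*} [Field K] [CharZero K] {u V κ : K}

theorem mass_jump_iff (hu : u ≠ 0) :
    -V * u + u ^ 2 / 2 - 1 / 16 = 0 ↔ V = u / 2 - 1 / (16 * u) := by
  have factor : -V * u + u ^ 2 / 2 - 1 / 16 = -u * (V - (u / 2 - 1 / (16 * u))) := by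
    field_simp
    ring
  rw [factor, mul_eq_zero_iff_left (neg_ne_zero.mpr hu), sub_eq_zero]

theorem momentum_jump_iff (hu : u ≠ 0) (hV : V = u / 2 - 1 / (16 * u)) :
    -(V / 2) * (u ^ 2 - 1 / 8) + u ^ 3 / 3 - (5 / 16) * κ = 0 ↔
      κ = (4 * u ^ 3 + 3 * u) / 15 - 1 / (80 * u) := by
  have factor : -(V / 2) * (u ^ 2 - 1 / 8) + u ^ 3 / 3 - (5 / 16) * κ =
      -(5 / 16) * (κ - ((4 * u ^ 3 + 3 * u) / 15 - 1 / (80 * u))) := by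
    rw [hV]
    field_simp
    ring
  rw [factor, mul_eq_zero_iff_left (by norm_num), sub_eq_zero]

theorem stokes_speed_iff (hκ : κ ≠ 0) :
    V = κ - 1 / (480 * κ) ↔ 480 * κ * (κ - V) - 1 = 0 := by
  have factor : 480 * κ * (κ - V) - 1 = -(480 * κ) * (V - (κ - 1 / (480 * κ))) := by
    field_simp
    ring
  rw [factor, mul_eq_zero_iff_left (by simpa using hκ), sub_eq_zero]

theorem stokes_speed_defect_eq_quartic_div (hu : u ≠ 0) (hV : V = u / 2 - 1 / (16 * u))
    (hκ : κ = (4 * u ^ 3 + 3 * u) / 15 - 1 / (80 * u)) :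
    480 * κ * (κ - V) - 1 =
      (1024 * (u ^ 2) ^ 4 - 384 * (u ^ 2) ^ 3 - 720 * (u ^ 2) ^ 2 + 168 * (u ^ 2) - 9) /
        (30 * u ^ 2) := by
  rw [hV, hκ]
  field_simp
  ring

theorem stmt16_general (hu : u ≠ 0) (hκ : κ ≠ 0) :
    (-V * u + u ^ 2 / 2 - 1 / 16 = 0 ∧
      -(V / 2) * (u ^ 2 - 1 / 8) + u ^ 3 / 3 - (5 / 16) * κ = 0 ∧
      V = κ - 1 / (480 * κ)) ↔
    (V = u / 2 - 1 / (16 * u) ∧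
      κ = (4 * u ^ 3 + 3 * u) / 15 - 1 / (80 * u) ∧
      1024 * (u ^ 2) ^ 4 - 384 * (u ^ 2) ^ 3 - 720 * (u ^ 2) ^ 2 + 168 * (u ^ 2) - 9 = 0) := by
  rw [mass_jump_iff hu]
  refine and_congr_right fun speed_eq => ?_
  rw [momentum_jump_iff hu speed_eq]
  refine and_congr_right fun wavenumber_eq => ?_
  have denom_ne_zero : 30 * u ^ 2 ≠ 0 := by simpa using hu
  rw [stokes_speed_iff hκ, stokes_speed_defect_eq_quartic_div hu speed_eq wavenumber_eq,
    div_eq_zero_iff, or_iff_left denom_ne_zero]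

end JumpConditions

/-- Solving the weakly nonlinear solitary-wave-to-periodic jump conditions of the
KdV5-Whitham equations: if `ū ≠ 0`, `κ > 0` satisfy (i) `-V ū + ū²/2 - 1/16 = 0`,
(ii) `-(V/2)(ū² - 1/8) + ū³/3 - (5/16) κ = 0`, (iii) `V = κ - 1/(480 κ)`, then
`V = ū/2 - 1/(16 ū)`, `κ = (4ū³ + 3ū)/15 - 1/(80 ū)`, and `ū²` is a root of
`1024 y⁴ - 384 y³ - 720 y² + 168 y - 9`. -/
theorem stmt16 (ub V κ : ℝ) (hub : ub ≠ 0) (hκ : 0 < κ)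
    (h1 : -V * ub + ub ^ 2 / 2 - 1/16 = 0)
    (h2 : -(V/2) * (ub ^ 2 - 1/8) + ub ^ 3 / 3 - (5/16) * κ = 0)
    (h3 : V = κ - 1/(480 * κ)) :
    V = ub/2 - 1/(16 * ub) ∧
    κ = (4 * ub ^ 3 + 3 * ub)/15 - 1/(80 * ub) ∧
    1024 * (ub ^ 2) ^ 4 - 384 * (ub ^ 2) ^ 3 - 720 * (ub ^ 2) ^ 2
      + 168 * (ub ^ 2) - 9 = 0 := by
  exact (stmt16_general hub hκ.ne').mp ⟨h1, h2, h3⟩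
end
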